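/- arXiv:1409.6011 — 3 statements merged into one kernel-verified Lean document; each statement's English description precedes it below -/
import Mathlib

section
/- Let R₁ > 0, σ > 0, γ ∈ ℝ, and let [ℓ,u] ⊆ [−R₁, R₁] with ℓ < u. Define v : (0,∞) → ℝ by v(x) = (∫_ℓ^u t² e^{γt} e^{−t²x/(2σ²)} dt) / (∫_ℓ^u e^{γt} e^{−t²x/(2σ²)} dt). Then v is differentiable and for every x > 0, v'(x) ≥ −2R₁²/x. -/
open MeasureTheory intervalIntegral

/-- The second moment `v(x)` of the truncated Gaussian with density
proportional to `e^{γt - t²x/(2σ²)}` on `[ℓ,u]`. -/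
noncomputable def truncSecondMoment (σ γ ℓ u : ℝ) : ℝ → ℝ := fun x =>
  (∫ t in ℓ..u, t ^ 2 * Real.exp (γ * t) * Real.exp (-t ^ 2 * x / (2 * σ ^ 2))) /
    (∫ t in ℓ..u, Real.exp (γ * t) * Real.exp (-t ^ 2 * x / (2 * σ ^ 2)))

/-!
Tilting a fixed law by `exp (s * t ^ 2)` gives an exponential family, so the derivative of its mean
square in `s` is the variance of `t ^ 2`; since `s = -x / (2 * σ ^ 2)` here, `v'` is
`-Var(X ^ 2) / (2 * σ ^ 2)`. As `t ↦ t ^ 2` is `2 * R₁`-Lipschitz on `[-R₁, R₁]`,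
`Var(X ^ 2) ≤ 4 * R₁ ^ 2 * Var X`, and `Var X ≤ σ ^ 2 / x` by Brascamp–Lieb. In one dimension the
latter follows by integrating the derivative of `(t - m) * exp (f t)`, with `f` the log-density and
`m` the mean: the boundary terms have the favourable sign because `m` lies in the interval.
-/

open Set ProbabilityTheory
open scoped NNReal Topology

section Variance

variable {Ω : Type*} {mΩ : MeasurableSpace Ω} {μ : Measure Ω} [IsProbabilityMeasure μ] {X : Ω → ℝ}

lemma variance_comp_le_of_lipschitzWith {f : ℝ → ℝ} {K : ℝ≥0} (hf : LipschitzWith K f)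
    (hX : MemLp X 2 μ) : Var[fun ω ↦ f (X ω); μ] ≤ K ^ 2 * Var[X; μ] := by
  have hfX : AEStronglyMeasurable (fun ω ↦ f (X ω)) μ :=
    hf.continuous.comp_aestronglyMeasurable hX.aestronglyMeasurable
  calc Var[fun ω ↦ f (X ω); μ]
      = Var[fun ω ↦ f (X ω) - f μ[X]; μ] := (variance_sub_const hfX _).symm
    _ ≤ ∫ ω, (f (X ω) - f μ[X]) ^ 2 ∂μ :=
        variance_le_expectation_sq (hfX.sub aestronglyMeasurable_const)
    _ ≤ ∫ ω, K ^ 2 * (X ω - μ[X]) ^ 2 ∂μ := by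
        refine integral_mono_of_nonneg (.of_forall fun _ ↦ sq_nonneg _)
          ((hX.sub (memLp_const _)).integrable_sq.const_mul _) (.of_forall fun ω ↦ ?_)
        beta_reduce
        rw [← mul_pow, sq_le_sq]
        simpa [abs_mul, Real.dist_eq] using hf.dist_le_mul (X ω) μ[X]
    _ = K ^ 2 * Var[X; μ] := by
        rw [MeasureTheory.integral_const_mul, variance_eq_integral hX.aemeasurable]

lemma variance_comp_le_of_lipschitzOnWith {f : ℝ → ℝ} {K : ℝ≥0} {s : Set ℝ}
    (hf : LipschitzOnWith K f s) (hX : MemLp X 2 μ) (hXs : ∀ᵐ ω ∂μ, X ω ∈ s) :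
    Var[fun ω ↦ f (X ω); μ] ≤ K ^ 2 * Var[X; μ] := by
  obtain ⟨g, hg, hfg⟩ := hf.extend_real
  rw [variance_congr (hXs.mono fun ω hω ↦ hfg hω)]
  exact variance_comp_le_of_lipschitzWith hg hX

lemma lipschitzOnWith_sq_Icc (R : ℝ≥0) :
    LipschitzOnWith (2 * R) (fun t : ℝ ↦ t ^ 2) (Icc (-R) R) := by
  refine .of_dist_le_mul fun s hs t ht ↦ ?_
  rw [Real.dist_eq, Real.dist_eq, sq_sub_sq, abs_mul]
  gcongr
  push_cast
  exact abs_le.2 ⟨by linarith [hs.1, ht.1], by linarith [hs.2, ht.2]⟩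

lemma variance_sq_le_of_abs_le {R : ℝ} (hX : AEStronglyMeasurable X μ) (hXR : ∀ᵐ ω ∂μ, |X ω| ≤ R) :
    Var[fun ω ↦ X ω ^ 2; μ] ≤ 4 * R ^ 2 * Var[X; μ] := by
  obtain ⟨ω, hω⟩ := hXR.exists
  lift R to ℝ≥0 using (abs_nonneg _).trans hω
  have h := variance_comp_le_of_lipschitzOnWith (lipschitzOnWith_sq_Icc R) (.of_bound hX R hXR)
    (hXR.mono fun _ ↦ abs_le.1)
  convert h using 2
  push_cast
  ring

end Variance

section Tilted

variable {Ω : Type*} {mΩ : MeasurableSpace Ω} {μ : Measure Ω}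

lemma integral_tilted_eq_div (f g : Ω → ℝ) :
    ∫ ω, g ω ∂(μ.tilted f) = (∫ ω, g ω * Real.exp (f ω) ∂μ) / ∫ ω, Real.exp (f ω) ∂μ := by
  rw [integral_tilted, ← MeasureTheory.integral_div]
  congr with ω
  rw [smul_eq_mul]
  ring

lemma integrableExpSet_eq_univ_of_mem_Icc [IsFiniteMeasure μ] {X : Ω → ℝ} {a b : ℝ}
    (hX : AEMeasurable X μ) (hXab : ∀ᵐ ω ∂μ, X ω ∈ Icc a b) : integrableExpSet X μ = univ :=
  eq_univ_of_forall fun _ ↦ integrable_exp_mul_of_mem_Icc hX hXab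

lemma hasDerivAt_integral_tilted_mul_self {X : Ω → ℝ} {s : ℝ}
    (hs : s ∈ interior (integrableExpSet X μ)) :
    HasDerivAt (fun r ↦ (μ.tilted (r * X ·))[X]) Var[X; μ.tilted (s * X ·)] s := by
  have hmean : (fun r ↦ (μ.tilted (r * X ·))[X]) =ᶠ[𝓝 s] deriv (cgf X μ) :=
    (isOpen_interior.eventually_mem hs).mono fun _ hr ↦ integral_tilted_mul_self hr
  rw [variance_tilted_mul hs, iteratedDeriv_succ, iteratedDeriv_one]
  exact (analyticAt_cgf hs).deriv.differentiableAt.hasDerivAt.congr_of_eventuallyEq hmean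

lemma ae_mem_tilted_restrict {s : Set Ω} (hs : MeasurableSet s) (f : Ω → ℝ) :
    ∀ᵐ ω ∂(μ.restrict s).tilted f, ω ∈ s :=
  (tilted_absolutelyContinuous _ _).ae_le (ae_restrict_mem hs)

lemma integrable_tilted_restrict_of_isCompact {E : Type*} [TopologicalSpace E] [T2Space E]
    [SecondCountableTopology E] [MeasurableSpace E] [OpensMeasurableSpace E] {μ : Measure E}
    [IsFiniteMeasureOnCompacts μ] {K : Set E} {f g : E → ℝ} (hK : IsCompact K)
    (hf : ContinuousOn f K) (hg : IntegrableOn g K μ) :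
    Integrable g ((μ.restrict K).tilted f) := by
  have hexp : ContinuousOn (fun t ↦ Real.exp (f t)) K := hf.rexp
  rw [integrable_tilted_iff (hexp.integrableOn_compact hK)]
  exact hg.continuousOn_mul hexp hK

end Tilted

section BrascampLieb

variable {f f' : ℝ → ℝ} {a b : ℝ}

lemma isProbabilityMeasure_tilted_restrict_Icc (hab : a < b) (hf : ContinuousOn f (Icc a b)) :
    IsProbabilityMeasure ((volume.restrict (Icc a b)).tilted f) := by
  have : NeZero (volume.restrict (Icc a b)) := ⟨by simp [hab]⟩
  exact isProbabilityMeasure_tilted (hf.rexp.integrableOn_compact isCompact_Icc)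

lemma neg_one_le_integral_sub_mul_deriv_tilted (hab : a < b) (hf : ContinuousOn f (Icc a b))
    (hf' : ∀ t ∈ Ioo a b, HasDerivAt f (f' t) t) (hf'_int : IntegrableOn f' (Icc a b))
    {c : ℝ} (hc : c ∈ Icc a b) :
    -1 ≤ ∫ t, (t - c) * f' t ∂(volume.restrict (Icc a b)).tilted f := by
  have hexp : ContinuousOn (fun t ↦ Real.exp (f t)) (Icc a b) := hf.rexp
  have hZ : 0 < ∫ t in Icc a b, Real.exp (f t) := by
    have : NeZero (volume.restrict (Icc a b)) := ⟨by simp [hab]⟩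
    exact integral_exp_pos (hexp.integrableOn_compact isCompact_Icc)
  have hmul_int : IntegrableOn (fun t ↦ (t - c) * f' t * Real.exp (f t)) (Icc a b) :=
    (hf'_int.continuousOn_mul (by fun_prop) isCompact_Icc).mul_continuousOn hexp isCompact_Icc
  have hparts := integral_eq_sub_of_hasDerivAt_of_le hab.le
    (f := fun t ↦ (t - c) * Real.exp (f t))
    (f' := fun t ↦ Real.exp (f t) + (t - c) * f' t * Real.exp (f t)) (by fun_prop)
    (fun t ht ↦ (((hasDerivAt_id t).sub_const c).mul (hf' t ht).exp).congr_deriv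
      (by simp only [id]; ring))
    ((intervalIntegrable_iff_integrableOn_Icc_of_le hab.le).2
      ((hexp.integrableOn_compact isCompact_Icc).add hmul_int))
  rw [integral_of_le hab.le, ← integral_Icc_eq_integral_Ioc,
    MeasureTheory.integral_add (hexp.integrableOn_compact isCompact_Icc) hmul_int] at hparts
  rw [integral_tilted_eq_div, le_div_iff₀ hZ]
  have hb : 0 ≤ (b - c) * Real.exp (f b) := mul_nonneg (sub_nonneg.2 hc.2) (Real.exp_nonneg _)
  have ha : 0 ≤ (c - a) * Real.exp (f a) := mul_nonneg (sub_nonneg.2 hc.1) (Real.exp_nonneg _)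
  linarith

lemma mul_variance_id_le_neg_integral_sub_mean_mul {μ : Measure ℝ} [IsProbabilityMeasure μ]
    {g : ℝ → ℝ} {κ : ℝ} {s : Set ℝ} (hid : MemLp id 2 μ) (hs : ∀ᵐ t ∂μ, t ∈ s) (hm : μ[id] ∈ s)
    (hg : Integrable (fun t ↦ (t - μ[id]) * g t) μ) (hκ : AntitoneOn (fun t ↦ g t + κ * t) s) :
    κ * Var[id; μ] ≤ -∫ t, (t - μ[id]) * g t ∂μ := by
  set m := μ[id]
  have hsub : MemLp (fun t ↦ t - m) 2 μ := hid.sub (memLp_const m)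
  have hsub_int : Integrable (fun t ↦ g m * (t - m)) μ :=
    (hsub.integrable one_le_two).const_mul (g m)
  have hcenter : ∫ t, (t - m) ∂μ = 0 := by
    rw [MeasureTheory.integral_sub (f := fun t ↦ t) (hid.integrable one_le_two)
      (integrable_const m)]
    simp [m]
  calc κ * Var[id; μ] = ∫ t, κ * (t - m) ^ 2 ∂μ := by
        rw [variance_eq_integral aemeasurable_id, MeasureTheory.integral_const_mul]
        rfl
    _ ≤ ∫ t, (g m * (t - m) - (t - m) * g t) ∂μ := by
        refine integral_mono_ae (hsub.integrable_sq.const_mul κ) (hsub_int.sub hg) ?_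
        filter_upwards [hs] with t ht
        have hanti : (t - m) * (g t + κ * t - (g m + κ * m)) ≤ 0 := by
          rcases le_total t m with htm | hmt
          · exact mul_nonpos_of_nonpos_of_nonneg (sub_nonpos.2 htm) (sub_nonneg.2 (hκ ht hm htm))
          · exact mul_nonpos_of_nonneg_of_nonpos (sub_nonneg.2 hmt) (sub_nonpos.2 (hκ hm ht hmt))
        linarith
    _ = -∫ t, (t - m) * g t ∂μ := by
        rw [MeasureTheory.integral_sub hsub_int hg, MeasureTheory.integral_const_mul, hcenter,
          mul_zero, zero_sub]

/-- The one-dimensional Brascamp–Lieb inequality; `hκ` is `κ`-strong convexity of the potential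
`-f`. -/
theorem mul_variance_id_tilted_le_one {κ : ℝ} (hab : a < b) (hf : ContinuousOn f (Icc a b))
    (hf' : ∀ t ∈ Ioo a b, HasDerivAt f (f' t) t)
    (hκ : AntitoneOn (fun t ↦ f' t + κ * t) (Icc a b)) :
    κ * Var[id; (volume.restrict (Icc a b)).tilted f] ≤ 1 := by
  set μ := (volume.restrict (Icc a b)).tilted f
  have : IsProbabilityMeasure μ := isProbabilityMeasure_tilted_restrict_Icc hab hf
  have hsupp : ∀ᵐ t ∂μ, t ∈ Icc a b := ae_mem_tilted_restrict measurableSet_Icc f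
  have hid : MemLp id 2 μ := memLp_of_bounded hsupp aestronglyMeasurable_id 2
  have hm : μ[id] ∈ Icc a b :=
    (convex_Icc a b).integral_mem isClosed_Icc hsupp (hid.integrable one_le_two)
  have hf'_int : IntegrableOn f' (Icc a b) := by
    have hlin : IntegrableOn (fun t ↦ κ * t) (Icc a b) := Continuous.integrableOn_Icc (by fun_prop)
    simpa [Pi.sub_def] using (hκ.integrableOn_isCompact isCompact_Icc).sub hlin
  have hmul_int : Integrable (fun t ↦ (t - μ[id]) * f' t) μ :=
    integrable_tilted_restrict_of_isCompact isCompact_Icc hf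
      (hf'_int.continuousOn_mul (by fun_prop) isCompact_Icc)
  calc κ * Var[id; μ] ≤ -∫ t, (t - μ[id]) * f' t ∂μ :=
        mul_variance_id_le_neg_integral_sub_mean_mul hid hsupp hm hmul_int hκ
    _ ≤ 1 := neg_le.1 (neg_one_le_integral_sub_mul_deriv_tilted hab hf hf' hf'_int hm)

end BrascampLieb

/-- The Gaussian law with precision `κ` and linear tilt `γ`, conditioned to lie in `[ℓ, u]`. It is
encoded as a tilt of Lebesgue measure on the bounded interval, so that every real `κ` gives a
probability measure when `ℓ < u`. -/
noncomputable def truncGaussian (γ κ ℓ u : ℝ) : Measure ℝ :=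
  (volume.restrict (Icc ℓ u)).tilted fun t ↦ γ * t - κ * t ^ 2 / 2

section TruncGaussian

variable {γ κ ℓ u : ℝ}

lemma isProbabilityMeasure_truncGaussian (hlu : ℓ < u) :
    IsProbabilityMeasure (truncGaussian γ κ ℓ u) :=
  isProbabilityMeasure_tilted_restrict_Icc hlu (by fun_prop)

lemma ae_mem_Icc_truncGaussian : ∀ᵐ t ∂truncGaussian γ κ ℓ u, t ∈ Icc ℓ u :=
  ae_mem_tilted_restrict measurableSet_Icc _

lemma mul_variance_id_truncGaussian_le_one (hlu : ℓ < u) :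
    κ * Var[id; truncGaussian γ κ ℓ u] ≤ 1 := by
  refine mul_variance_id_tilted_le_one (f' := fun t ↦ γ - κ * t) hlu (by fun_prop)
    (fun t _ ↦ ?_) (by simpa using antitoneOn_const)
  refine (((hasDerivAt_id t).const_mul γ).sub
    (((hasDerivAt_pow 2 t).const_mul κ).div_const 2)).congr_deriv ?_
  push_cast
  ring

lemma variance_sq_truncGaussian_le {R : ℝ} (hℓ : -R ≤ ℓ) (hlu : ℓ < u) (hu : u ≤ R) :
    Var[fun t ↦ t ^ 2; truncGaussian γ κ ℓ u] ≤ 4 * R ^ 2 * Var[id; truncGaussian γ κ ℓ u] := by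
  have := isProbabilityMeasure_truncGaussian (γ := γ) (κ := κ) hlu
  exact variance_sq_le_of_abs_le aestronglyMeasurable_id <| ae_mem_Icc_truncGaussian.mono
    fun t ht ↦ abs_le.2 ⟨hℓ.trans ht.1, ht.2.trans hu⟩

lemma truncGaussian_eq_tilted_mul_sq :
    truncGaussian γ κ ℓ u =
      ((volume.restrict (Icc ℓ u)).tilted (γ * ·)).tilted (-κ / 2 * · ^ 2) := by
  rw [tilted_tilted (Continuous.integrableOn_Icc (by fun_prop)), truncGaussian]
  congr with t
  simp only [Pi.add_apply]
  ring

lemma hasDerivAt_integral_sq_truncGaussian (hlu : ℓ < u) :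
    HasDerivAt (fun κ ↦ ∫ t, t ^ 2 ∂truncGaussian γ κ ℓ u)
      (-Var[fun t ↦ t ^ 2; truncGaussian γ κ ℓ u] / 2) κ := by
  simp only [truncGaussian_eq_tilted_mul_sq]
  have : IsProbabilityMeasure ((volume.restrict (Icc ℓ u)).tilted (γ * ·)) :=
    isProbabilityMeasure_tilted_restrict_Icc hlu (by fun_prop)
  have hbdd : ∀ᵐ t ∂(volume.restrict (Icc ℓ u)).tilted (γ * ·),
      t ^ 2 ∈ Icc 0 (max |ℓ| |u| ^ 2) := by
    filter_upwards [ae_mem_tilted_restrict measurableSet_Icc _] with t ht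
    exact ⟨sq_nonneg t, sq_le_sq.2 ((abs_le_max_abs_abs ht.1 ht.2).trans (le_abs_self _))⟩
  have hmean := hasDerivAt_integral_tilted_mul_self (s := -κ / 2) <| by
    rw [integrableExpSet_eq_univ_of_mem_Icc (by fun_prop) hbdd, interior_univ]
    exact mem_univ _
  refine (hmean.comp κ ((hasDerivAt_id κ).neg.div_const 2)).congr_deriv ?_
  rw [mul_div_assoc', mul_neg_one]

lemma truncSecondMoment_eq_integral_truncGaussian (σ : ℝ) (hlu : ℓ ≤ u) :
    truncSecondMoment σ γ ℓ u = fun x ↦ ∫ t, t ^ 2 ∂truncGaussian γ (x / σ ^ 2) ℓ u := by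
  have hexp (x t : ℝ) : Real.exp (γ * t - x / σ ^ 2 * t ^ 2 / 2) =
      Real.exp (γ * t) * Real.exp (-t ^ 2 * x / (2 * σ ^ 2)) := by
    rw [← Real.exp_add]
    ring_nf
  ext x
  simp only [truncGaussian, truncSecondMoment, integral_tilted_eq_div, hexp, mul_assoc,
    integral_of_le hlu, integral_Icc_eq_integral_Ioc]

lemma hasDerivAt_truncSecondMoment (σ x : ℝ) (hlu : ℓ < u) :
    HasDerivAt (truncSecondMoment σ γ ℓ u)
      (-Var[fun t ↦ t ^ 2; truncGaussian γ (x / σ ^ 2) ℓ u] / (2 * σ ^ 2)) x := by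
  rw [truncSecondMoment_eq_integral_truncGaussian σ hlu.le]
  refine ((hasDerivAt_integral_sq_truncGaussian hlu).comp x
    ((hasDerivAt_id x).div_const (σ ^ 2))).congr_deriv ?_
  rw [div_mul_div_comm, mul_one, id]

end TruncGaussian

/-- Derivative bound for the truncated-Gaussian second moment: for
`[ℓ,u] ⊆ [-R₁,R₁]` with `ℓ < u`, the function `v` is differentiable on
`(0,∞)` and `v'(x) ≥ -2R₁²/x`. -/
theorem truncated_second_moment_deriv_bound
    (R₁ σ γ ℓ u : ℝ) (hR : 0 < R₁) (hσ : 0 < σ)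
    (hℓ : -R₁ ≤ ℓ) (hlu : ℓ < u) (hu : u ≤ R₁) :
    ∀ x : ℝ, 0 < x →
      DifferentiableAt ℝ (truncSecondMoment σ γ ℓ u) x ∧
        -(2 * R₁ ^ 2) / x ≤ deriv (truncSecondMoment σ γ ℓ u) x := by
  intro x hx
  have hv := hasDerivAt_truncSecondMoment (γ := γ) σ x hlu
  refine ⟨hv.differentiableAt, ?_⟩
  set μ := truncGaussian γ (x / σ ^ 2) ℓ u
  have hsq : Var[fun t ↦ t ^ 2; μ] ≤ 4 * R₁ ^ 2 * Var[id; μ] :=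
    variance_sq_truncGaussian_le hℓ hlu hu
  have hvar : Var[id; μ] ≤ σ ^ 2 / x := by
    rw [← inv_div, ← one_div, le_div_iff₀' (by positivity)]
    exact mul_variance_id_truncGaussian_le_one hlu
  rw [hv.deriv, neg_div, neg_div, neg_le_neg_iff]
  calc Var[fun t ↦ t ^ 2; μ] / (2 * σ ^ 2)
      ≤ 4 * R₁ ^ 2 * (σ ^ 2 / x) / (2 * σ ^ 2) := by
        gcongr
        exact hsq.trans (by gcongr)
    _ = 2 * R₁ ^ 2 / x := by
        field_simp
        norm_num
end

section
/- Let n ≥ 1, R₁ > 0, σ > 0, and 0 < α ≤ 1/2. Let f : ℝⁿ → ℝ≥0 be a logconcave function whose support is a compact subset of R₁·B_n, and define G(s) = ∫_{ℝⁿ} f(x) e^{−‖x‖²/(2s)} dx for s > 0. Then G(σ²/(1+α)) · G(σ²/(1−α)) ≤ exp(2·R₁²·α²/σ²) · G(σ²)². Equivalently, for X drawn from the distribution with density proportional to g(x) = f(x)e^{−‖x‖²/(2σ²(1/(1+α)))} and Y the ratio of consecutive-phase densities, E(Y²)/E(Y)² ≤ exp(2R₁²α²/σ²). -/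
open MeasureTheory

/-- A nonnegative function is logconcave if
`f(λx + (1-λ)y) ≥ f(x)^λ · f(y)^{1-λ}`. -/
def LogConcaveFn {E : Type*} [AddCommMonoid E] [Module ℝ E] (f : E → ℝ) : Prop :=
  ∀ x y : E, ∀ l : ℝ, 0 ≤ l → l ≤ 1 →
    f x ^ l * f y ^ (1 - l) ≤ f (l • x + (1 - l) • y)

/-!
By the Prékopa–Leindler inequality with weights `1/2`, it suffices to compare the average of the
two outer Gaussian exponents at `x` and `y` with the middle one at `z = (x + y) / 2`. Completing
the square gives `(1 - α²)‖z‖² ≤ ((1 + α)‖x‖² + (1 - α)‖y‖²) / 2`, and the missing term `α²‖z‖²`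
is at most `α²R²`, since `z` lies in the ball.

The Prékopa–Leindler inequality on the line is the inequality `|A| + |B| ≤ |A + B|` for superlevel
sets, integrated over the levels; Fubini's theorem carries it to higher dimensions.
-/

open scoped ENNReal Pointwise

theorem volume_add_volume_le_volume_add_of_isCompact {K L : Set ℝ} (hK : IsCompact K)
    (hL : IsCompact L) (hK_ne : K.Nonempty) (hL_ne : L.Nonempty) :
    volume K + volume L ≤ volume (K + L) := by
  obtain ⟨k, hkK, hk⟩ := hK.exists_isGreatest hK_ne
  obtain ⟨l, hlL, hl⟩ := hL.exists_isLeast hL_ne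
  -- The translates `l + K` and `k + L` fit inside `K + L` and share only the point `k + l`.
  have hdisj : AEDisjoint volume (l +ᵥ K) (k +ᵥ L) := by
    refine measure_mono_null (t := {k + l}) ?_ Real.volume_singleton
    rintro _ ⟨⟨x, hx, rfl⟩, y, hy, hxy⟩
    have := hk hx
    have := hl hy
    simp only [vadd_eq_add, Set.mem_singleton_iff] at hxy ⊢
    linarith
  calc volume K + volume L = volume ((l +ᵥ K) ∪ (k +ᵥ L)) := by
        rw [measure_union₀ (hL.vadd k).measurableSet.nullMeasurableSet hdisj, measure_vadd,
          measure_vadd]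
    _ ≤ volume (K + L) := by
        refine measure_mono (Set.union_subset ?_ (Set.vadd_set_subset_vadd hkK))
        rw [add_comm K L]
        exact Set.vadd_set_subset_vadd hlL

theorem volume_add_volume_le_volume_add {A B : Set ℝ} (hA : MeasurableSet A) (hB : MeasurableSet B)
    (hA_ne : A.Nonempty) (hB_ne : B.Nonempty) :
    volume A + volume B ≤ volume (A + B) := by
  obtain ⟨x, hx⟩ := hA_ne
  obtain ⟨y, hy⟩ := hB_ne
  simp only [hA.measure_eq_iSup_isCompact, hB.measure_eq_iSup_isCompact, iSup_and']
  refine ENNReal.biSup_add_biSup_le' ⟨∅, by simp⟩ ⟨∅, by simp⟩ ?_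
  rintro K ⟨hKA, hK⟩ L ⟨hLB, hL⟩
  calc volume K + volume L ≤ volume (insert x K) + volume (insert y L) := by
        gcongr <;> exact Set.subset_insert _ _
    _ ≤ volume (insert x K + insert y L) :=
        volume_add_volume_le_volume_add_of_isCompact (hK.insert x) (hL.insert y)
          (Set.insert_nonempty x K) (Set.insert_nonempty y L)
    _ ≤ volume (A + B) :=
        measure_mono (Set.add_subset_add (Set.insert_subset hx hKA) (Set.insert_subset hy hLB))

theorem mul_volume_add_mul_volume_le {A B : Set ℝ} (hA : MeasurableSet A) (hB : MeasurableSet B)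
    (hA_ne : A.Nonempty) (hB_ne : B.Nonempty) {a b : ℝ} (ha : 0 ≤ a) (hb : 0 ≤ b) :
    ENNReal.ofReal a * volume A + ENNReal.ofReal b * volume B ≤ volume (a • A + b • B) := by
  simpa [Measure.addHaar_smul, abs_of_nonneg, ha, hb] using
    volume_add_volume_le_volume_add (hA.const_smul₀ a) (hB.const_smul₀ b)
      (hA_ne.smul_set (a := a)) (hB_ne.smul_set (a := b))

theorem lintegral_eq_lintegral_measure_lt {X : Type*} [MeasurableSpace X] (μ : Measure X)
    {u : X → ℝ≥0∞} (hu : Measurable u) (hu_top : ∀ x, u x ≠ ∞) :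
    ∫⁻ x, u x ∂μ = ∫⁻ t in Set.Ioi (0 : ℝ), μ {x | ENNReal.ofReal t < u x} := by
  calc ∫⁻ x, u x ∂μ = ∫⁻ x, ENNReal.ofReal (u x).toReal ∂μ := by
        simp only [ENNReal.ofReal_toReal (hu_top _)]
    _ = ∫⁻ t in Set.Ioi (0 : ℝ), μ {x | t < (u x).toReal} :=
        lintegral_eq_lintegral_meas_lt μ (.of_forall fun _ ↦ ENNReal.toReal_nonneg)
          hu.ennreal_toReal.aemeasurable
    _ = ∫⁻ t in Set.Ioi (0 : ℝ), μ {x | ENNReal.ofReal t < u x} := by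
        refine setLIntegral_congr_fun measurableSet_Ioi fun t ht ↦ ?_
        simp only [ENNReal.ofReal_lt_iff_lt_toReal (le_of_lt ht) (hu_top _)]

theorem ennreal_geom_mean_le_arith_mean2_weighted {a b : ℝ} (ha : 0 < a) (hb : 0 < b)
    (hab : a + b = 1) (x y : ℝ≥0∞) :
    x ^ a * y ^ b ≤ ENNReal.ofReal a * x + ENNReal.ofReal b * y := by
  have young := ENNReal.young_inequality (x ^ a) (y ^ b) (.inv_inv ha hb hab)
  rwa [ENNReal.rpow_rpow_inv ha.ne', ENNReal.rpow_rpow_inv hb.ne',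
    ENNReal.ofReal_inv_of_pos ha, ENNReal.ofReal_inv_of_pos hb, ENNReal.div_eq_inv_mul,
    ENNReal.div_eq_inv_mul, inv_inv, inv_inv] at young

section Line

variable {a b : ℝ} {f g h : ℝ → ℝ≥0∞}

theorem mul_volume_lt_add_mul_volume_lt_le (ha : 0 < a) (hb : 0 < b) (hab : a + b = 1)
    (hf : Measurable f) (hg : Measurable g)
    (hfgh : ∀ x y, f x ^ a * g y ^ b ≤ h (a • x + b • y)) {t : ℝ≥0∞}
    (htf : t < ⨆ x, f x) (htg : t < ⨆ x, g x) :
    ENNReal.ofReal a * volume {x | t < f x} + ENNReal.ofReal b * volume {x | t < g x} ≤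
      volume {x | t < h x} := by
  refine (mul_volume_add_mul_volume_le (measurableSet_lt measurable_const hf)
    (measurableSet_lt measurable_const hg) (lt_iSup_iff.1 htf) (lt_iSup_iff.1 htg)
    ha.le hb.le).trans (measure_mono ?_)
  rintro _ ⟨_, ⟨x, hx, rfl⟩, _, ⟨y, hy, rfl⟩, rfl⟩
  calc t = t ^ a * t ^ b := by
        rw [← ENNReal.rpow_add_of_nonneg a b ha.le hb.le, hab, ENNReal.rpow_one]
    _ < f x ^ a * g y ^ b :=
        ENNReal.mul_lt_mul (ENNReal.rpow_lt_rpow hx ha) (ENNReal.rpow_lt_rpow hy hb)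
    _ ≤ h (a • x + b • y) := hfgh x y

/-- The Brunn–Minkowski inequality needs nonempty sets: equal suprema make `{t < f}` and `{t < g}`
nonempty for the same `t`. -/
theorem mul_lintegral_add_mul_lintegral_le_of_iSup_eq_one (ha : 0 < a) (hb : 0 < b)
    (hab : a + b = 1) (hf : Measurable f) (hg : Measurable g) (hh : Measurable h)
    (hfgh : ∀ x y, f x ^ a * g y ^ b ≤ h (a • x + b • y))
    (hf_sup : ⨆ x, f x = 1) (hg_sup : ⨆ x, g x = 1) :
    (ENNReal.ofReal a * ∫⁻ x, f x) + ENNReal.ofReal b * ∫⁻ x, g x ≤ ∫⁻ x, h x := by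
  have hf_le (x : ℝ) : f x ≤ 1 := hf_sup ▸ le_iSup f x
  have hg_le (x : ℝ) : g x ≤ 1 := hg_sup ▸ le_iSup g x
  -- The layer-cake formula is for finite functions, so cap `h`.
  have hfgh_min (x y : ℝ) : f x ^ a * g y ^ b ≤ min (h (a • x + b • y)) 1 :=
    le_min (hfgh x y) <| mul_le_one' (ENNReal.rpow_le_one (hf_le x) ha.le)
      (ENNReal.rpow_le_one (hg_le y) hb.le)
  calc (ENNReal.ofReal a * ∫⁻ x, f x) + ENNReal.ofReal b * ∫⁻ x, g x
      ≤ ∫⁻ x, min (h x) 1 := by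
        rw [lintegral_eq_lintegral_measure_lt _ hf fun x ↦ ne_top_of_le_ne_top (by simp) (hf_le x),
          lintegral_eq_lintegral_measure_lt _ hg fun x ↦ ne_top_of_le_ne_top (by simp) (hg_le x),
          lintegral_eq_lintegral_measure_lt _ (hh.min measurable_const) fun x ↦
            ne_top_of_le_ne_top (by simp) (min_le_right (h x) 1),
          ← lintegral_const_mul' _ _ ENNReal.ofReal_ne_top,
          ← lintegral_const_mul' _ _ ENNReal.ofReal_ne_top]
        refine (le_lintegral_add _ _).trans (lintegral_mono fun t ↦ ?_)
        rcases lt_or_ge (ENNReal.ofReal t) 1 with ht | ht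
        · exact mul_volume_lt_add_mul_volume_lt_le ha hb hab hf hg hfgh_min (hf_sup ▸ ht)
            (hg_sup ▸ ht)
        · simp [((hf_le _).trans ht).not_gt, ((hg_le _).trans ht).not_gt]
    _ ≤ ∫⁻ x, h x := lintegral_mono fun x ↦ min_le_left (h x) 1

theorem lintegral_rpow_mul_lintegral_rpow_le_of_iSup_ne_top (ha : 0 < a) (hb : 0 < b)
    (hab : a + b = 1) (hf : Measurable f) (hg : Measurable g) (hh : Measurable h)
    (hfgh : ∀ x y, f x ^ a * g y ^ b ≤ h (a • x + b • y))
    (hf_sup : ⨆ x, f x ≠ ∞) (hg_sup : ⨆ x, g x ≠ ∞) :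
    (∫⁻ x, f x) ^ a * (∫⁻ x, g x) ^ b ≤ ∫⁻ x, h x := by
  set F := ⨆ x, f x
  set G := ⨆ x, g x
  rcases eq_or_ne F 0 with hF0 | hF0
  · simp [ENNReal.iSup_eq_zero.1 hF0, ha]
  rcases eq_or_ne G 0 with hG0 | hG0
  · simp [ENNReal.iSup_eq_zero.1 hG0, hb]
  have hFa_top : F ^ a ≠ ∞ := ENNReal.rpow_ne_top_of_nonneg ha.le hf_sup
  have hGb_top : G ^ b ≠ ∞ := ENNReal.rpow_ne_top_of_nonneg hb.le hg_sup
  have hFa0 : F ^ a ≠ 0 := by simp [hF0, hf_sup]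
  have hGb0 : G ^ b ≠ 0 := by simp [hG0, hg_sup]
  have hfgh_div (x y : ℝ) :
      (f x / F) ^ a * (g y / G) ^ b ≤ h (a • x + b • y) / (F ^ a * G ^ b) := by
    rw [ENNReal.div_rpow_of_nonneg _ _ ha.le, ENNReal.div_rpow_of_nonneg _ _ hb.le,
      ← ENNReal.mul_div_mul_comm (.inl hFa0) (.inl hFa_top)]
    exact ENNReal.div_le_div_right (hfgh x y) _
  have normalized : (∫⁻ x, f x / F) ^ a * (∫⁻ x, g x / G) ^ b ≤ ∫⁻ x, h x / (F ^ a * G ^ b) :=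
    (ennreal_geom_mean_le_arith_mean2_weighted ha hb hab _ _).trans <|
      mul_lintegral_add_mul_lintegral_le_of_iSup_eq_one ha hb hab (hf.div_const F) (hg.div_const G)
        (hh.div_const _) hfgh_div (by rw [← ENNReal.iSup_div, ENNReal.div_self hF0 hf_sup])
        (by rw [← ENNReal.iSup_div, ENNReal.div_self hG0 hg_sup])
  simp only [div_eq_mul_inv] at normalized
  rw [lintegral_mul_const _ hf, lintegral_mul_const _ hg, lintegral_mul_const _ hh] at normalized
  simp only [← div_eq_mul_inv] at normalized
  rwa [ENNReal.div_rpow_of_nonneg _ _ ha.le, ENNReal.div_rpow_of_nonneg _ _ hb.le,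
    ← ENNReal.mul_div_mul_comm (.inl hFa0) (.inl hFa_top),
    ENNReal.div_le_iff (mul_ne_zero hFa0 hGb0) (ENNReal.mul_ne_top hFa_top hGb_top),
    ENNReal.div_mul_cancel (mul_ne_zero hFa0 hGb0) (ENNReal.mul_ne_top hFa_top hGb_top)]
    at normalized

end Line

/-- The measure `μ` satisfies the Prékopa–Leindler inequality. The weights are positive, so that
`0 ^ a = 0`, and the functions take values in `ℝ≥0∞`, so that marginals of products stay in the
class. -/
def PrekopaLeindler {E : Type*} [AddCommMonoid E] [Module ℝ E] [MeasurableSpace E]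
    (μ : Measure E) : Prop :=
  ∀ ⦃a b : ℝ⦄, 0 < a → 0 < b → a + b = 1 →
    ∀ ⦃f g h : E → ℝ≥0∞⦄, Measurable f → Measurable g → Measurable h →
      (∀ x y, f x ^ a * g y ^ b ≤ h (a • x + b • y)) →
      (∫⁻ x, f x ∂μ) ^ a * (∫⁻ x, g x ∂μ) ^ b ≤ ∫⁻ x, h x ∂μ

theorem lintegral_rpow_eq_iSup_min {X : Type*} [MeasurableSpace X] (μ : Measure X)
    {f : X → ℝ≥0∞} (hf : Measurable f) {a : ℝ} (ha : 0 < a) :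
    (∫⁻ x, f x ∂μ) ^ a = ⨆ N : ℕ, (∫⁻ x, min (f x) N ∂μ) ^ a := by
  have hmono : Monotone fun (N : ℕ) x ↦ min (f x) N :=
    fun M N hMN x ↦ min_le_min le_rfl (by exact_mod_cast hMN)
  have hsup (x : X) : ⨆ N : ℕ, min (f x) N = f x := by
    rw [← inf_iSup_eq, ENNReal.iSup_natCast, inf_top_eq]
  calc (∫⁻ x, f x ∂μ) ^ a = (⨆ N : ℕ, ∫⁻ x, min (f x) N ∂μ) ^ a := by
        rw [← lintegral_iSup (fun N ↦ hf.min measurable_const) hmono]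
        simp only [hsup]
    _ = ⨆ N : ℕ, (∫⁻ x, min (f x) N ∂μ) ^ a := (ENNReal.orderIsoRpow a ha).map_iSup _

theorem prekopaLeindler_real : PrekopaLeindler (volume : Measure ℝ) := by
  intro a b ha hb hab f g h hf hg hh hfgh
  have iSup_min_ne_top (k : ℝ → ℝ≥0∞) (N : ℕ) : ⨆ x, min (k x) N ≠ ∞ :=
    ne_top_of_le_ne_top (ENNReal.natCast_ne_top N) (iSup_le fun _ ↦ min_le_right _ _)
  simp only [lintegral_rpow_eq_iSup_min _ hf ha, lintegral_rpow_eq_iSup_min _ hg hb,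
    ENNReal.iSup_mul, ENNReal.mul_iSup]
  refine iSup₂_le fun M N ↦ lintegral_rpow_mul_lintegral_rpow_le_of_iSup_ne_top ha hb hab
    (hf.min measurable_const) (hg.min measurable_const) hh (fun x y ↦ ?_)
    (iSup_min_ne_top f _) (iSup_min_ne_top g _)
  calc min (f x) _ ^ a * min (g y) _ ^ b ≤ f x ^ a * g y ^ b := by
        gcongr <;> exact min_le_left _ _
    _ ≤ h (a • x + b • y) := hfgh x y

theorem prekopaLeindler_dirac {E : Type*} [AddCommMonoid E] [Module ℝ E] [MeasurableSpace E]
    (x : E) : PrekopaLeindler (Measure.dirac x) := by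
  intro a b _ _ hab f g h hf hg hh hfgh
  simpa only [lintegral_dirac' x hf, lintegral_dirac' x hg, lintegral_dirac' x hh,
    Convex.combo_self hab] using hfgh x x

namespace PrekopaLeindler

variable {E F : Type*} [AddCommMonoid E] [Module ℝ E] [MeasurableSpace E]
  [AddCommMonoid F] [Module ℝ F] [MeasurableSpace F] {μ : Measure E} {ν : Measure F}

theorem prod [SFinite ν] (hμ : PrekopaLeindler μ) (hν : PrekopaLeindler ν) :
    PrekopaLeindler (μ.prod ν) := by
  intro a b ha hb hab f g h hf hg hh hfgh
  rw [lintegral_prod _ hf.aemeasurable, lintegral_prod _ hg.aemeasurable,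
    lintegral_prod _ hh.aemeasurable]
  refine hμ ha hb hab hf.lintegral_prod_right' hg.lintegral_prod_right' hh.lintegral_prod_right'
    fun x y ↦ ?_
  exact hν ha hb hab (by fun_prop) (by fun_prop) (by fun_prop) fun x' y' ↦ hfgh (x, x') (y, y')

theorem of_measurePreserving (hμ : PrekopaLeindler μ) (e : E →ₗ[ℝ] F)
    (he : MeasurePreserving e μ ν) : PrekopaLeindler ν := by
  intro a b ha hb hab f g h hf hg hh hfgh
  rw [← he.lintegral_comp hf, ← he.lintegral_comp hg, ← he.lintegral_comp hh]
  refine hμ ha hb hab (hf.comp he.measurable) (hg.comp he.measurable) (hh.comp he.measurable)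
    fun x y ↦ ?_
  simpa only [map_add, map_smul] using hfgh (e x) (e y)

theorem integral_rpow_mul_integral_rpow_le (hμ : PrekopaLeindler μ) {a b : ℝ} (ha : 0 < a)
    (hb : 0 < b) (hab : a + b = 1) {f g h : E → ℝ} (hf : Measurable f) (hg : Measurable g)
    (hh : Measurable h) (hf0 : 0 ≤ f) (hg0 : 0 ≤ g) (hh_int : Integrable h μ)
    (hfgh : ∀ x y, f x ^ a * g y ^ b ≤ h (a • x + b • y)) :
    (∫ x, f x ∂μ) ^ a * (∫ x, g x ∂μ) ^ b ≤ ∫ x, h x ∂μ := by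
  have hh0 (x : E) : 0 ≤ h x :=
    Convex.combo_self hab x ▸
      (mul_nonneg (Real.rpow_nonneg (hf0 x) a) (Real.rpow_nonneg (hg0 x) b)).trans (hfgh x x)
  have hfgh_ofReal (x y : E) : ENNReal.ofReal (f x) ^ a * ENNReal.ofReal (g y) ^ b ≤
      ENNReal.ofReal (h (a • x + b • y)) := by
    rw [ENNReal.ofReal_rpow_of_nonneg (hf0 x) ha.le, ENNReal.ofReal_rpow_of_nonneg (hg0 y) hb.le,
      ← ENNReal.ofReal_mul (Real.rpow_nonneg (hf0 x) a)]
    exact ENNReal.ofReal_le_ofReal (hfgh x y)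
  rw [integral_eq_lintegral_of_nonneg_ae (.of_forall hf0) hf.aestronglyMeasurable,
    integral_eq_lintegral_of_nonneg_ae (.of_forall hg0) hg.aestronglyMeasurable,
    integral_eq_lintegral_of_nonneg_ae (.of_forall hh0) hh.aestronglyMeasurable,
    ENNReal.toReal_rpow, ENNReal.toReal_rpow, ← ENNReal.toReal_mul]
  exact ENNReal.toReal_mono hh_int.lintegral_lt_top.ne <|
    hμ ha hb hab hf.ennreal_ofReal hg.ennreal_ofReal hh.ennreal_ofReal hfgh_ofReal

end PrekopaLeindler

theorem prekopaLeindler_pi (n : ℕ) : PrekopaLeindler (volume : Measure (Fin n → ℝ)) := by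
  induction n with
  | zero =>
    rw [Measure.volume_pi_eq_dirac]
    exact prekopaLeindler_dirac _
  | succ n ih =>
    refine (prekopaLeindler_real.prod ih).of_measurePreserving
      (Fin.consLinearEquiv ℝ fun _ ↦ ℝ).toLinearMap ?_
    convert! (volume_preserving_piFinSuccAbove (fun _ : Fin (n + 1) ↦ ℝ) 0).symm using 1
    ext p i
    simp [MeasurableEquiv.piFinSuccAbove, Fin.consLinearEquiv]

theorem prekopaLeindler_volume (E : Type*) [NormedAddCommGroup E] [InnerProductSpace ℝ E]
    [FiniteDimensional ℝ E] [MeasurableSpace E] [BorelSpace E] :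
    PrekopaLeindler (volume : Measure E) :=
  (prekopaLeindler_pi _).of_measurePreserving
    ((WithLp.linearEquiv 2 ℝ _).symm.trans
      (stdOrthonormalBasis ℝ E).repr.symm.toLinearEquiv).toLinearMap
    ((stdOrthonormalBasis ℝ E).measurePreserving_repr_symm.comp (PiLp.volume_preserving_toLp _))

theorem LogConcaveFn.integral_mul_exp_rpow_mul_le {E : Type*} [AddCommMonoid E] [Module ℝ E]
    [MeasurableSpace E] {μ : Measure E} (hμ : PrekopaLeindler μ) {f : E → ℝ}
    (hf : LogConcaveFn f) (hf0 : 0 ≤ f) (hfm : Measurable f) {a b : ℝ} (ha : 0 < a) (hb : 0 < b)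
    (hab : a + b = 1) {φ ψ χ : E → ℝ} (hφ : Measurable φ) (hψ : Measurable ψ) (hχ : Measurable χ)
    (h_int : Integrable (fun x ↦ f x * Real.exp (χ x)) μ)
    (hφψχ : ∀ x ∈ f.support, ∀ y ∈ f.support, a * φ x + b * ψ y ≤ χ (a • x + b • y)) :
    (∫ x, f x * Real.exp (φ x) ∂μ) ^ a * (∫ x, f x * Real.exp (ψ x) ∂μ) ^ b ≤
      ∫ x, f x * Real.exp (χ x) ∂μ := by
  have hmul_exp_nonneg (θ : E → ℝ) (x : E) : 0 ≤ f x * Real.exp (θ x) :=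
    mul_nonneg (hf0 x) (Real.exp_nonneg _)
  refine hμ.integral_rpow_mul_integral_rpow_le ha hb hab (by fun_prop) (by fun_prop)
    (by fun_prop) (hmul_exp_nonneg φ) (hmul_exp_nonneg ψ) h_int fun x y ↦ ?_
  by_cases hx : f x = 0
  · simpa [hx, ha.ne'] using hmul_exp_nonneg χ _
  by_cases hy : f y = 0
  · simpa [hy, hb.ne'] using hmul_exp_nonneg χ _
  have hfxy : f x ^ a * f y ^ b ≤ f (a • x + b • y) := by
    obtain rfl : b = 1 - a := by linarith
    exact hf x y a ha.le (by linarith)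
  calc (f x * Real.exp (φ x)) ^ a * (f y * Real.exp (ψ y)) ^ b
      = (f x ^ a * f y ^ b) * Real.exp (a * φ x + b * ψ y) := by
        rw [Real.mul_rpow (hf0 x) (Real.exp_nonneg _), Real.mul_rpow (hf0 y) (Real.exp_nonneg _),
          ← Real.exp_mul, ← Real.exp_mul, Real.exp_add, mul_comm a, mul_comm b]
        ring
    _ ≤ f (a • x + b • y) * Real.exp (χ (a • x + b • y)) :=
        mul_le_mul hfxy (Real.exp_le_exp.2 (hφψχ x hx y hy)) (Real.exp_nonneg _) (hf0 _)

theorem integrable_mul_of_integrable_mul_of_isCompact {X : Type*} [TopologicalSpace X]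
    [MeasurableSpace X] [OpensMeasurableSpace X] [T2Space X] {μ : Measure X} {f φ ψ : X → ℝ}
    {K : Set X} (hK : IsCompact K) (hfK : f.support ⊆ K) (hφ : ContinuousOn φ K)
    (hφ0 : ∀ x ∈ K, φ x ≠ 0) (hψ : ContinuousOn ψ K) (h_int : Integrable (fun x ↦ f x * φ x) μ) :
    Integrable (fun x ↦ f x * ψ x) μ := by
  rw [← integrableOn_iff_integrable_of_support_subset
    ((Function.support_mul_subset_left f ψ).trans hfK)]
  refine (h_int.integrableOn.mul_continuousOn (hψ.div hφ hφ0) hK).congr_fun (fun x hx ↦ ?_)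
    hK.measurableSet
  simp only [Pi.div_apply, mul_assoc, mul_div_cancel₀ _ (hφ0 x hx)]

theorem one_sub_sq_mul_norm_sq_le {E : Type*} [NormedAddCommGroup E] [InnerProductSpace ℝ E]
    (x y : E) (α : ℝ) :
    (1 - α ^ 2) * ‖(2⁻¹ : ℝ) • x + (2⁻¹ : ℝ) • y‖ ^ 2 ≤
      2⁻¹ * ((1 + α) * ‖x‖ ^ 2 + (1 - α) * ‖y‖ ^ 2) := by
  -- The right side minus the left side is a quarter of this square.
  have hsq : 0 ≤ ‖(1 + α) • x - (1 - α) • y‖ ^ 2 := sq_nonneg _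
  rw [norm_sub_sq_real] at hsq
  rw [norm_add_sq_real]
  simp only [norm_smul, mul_pow, Real.norm_eq_abs, sq_abs, real_inner_smul_left,
    real_inner_smul_right] at hsq ⊢
  linarith

theorem average_gaussian_exponent_le {E : Type*} [NormedAddCommGroup E] [InnerProductSpace ℝ E]
    {x y : E} {R s : ℝ} (α : ℝ) (hs : 0 < s) (hx : x ∈ Metric.closedBall 0 R)
    (hy : y ∈ Metric.closedBall 0 R) :
    2⁻¹ * (-‖x‖ ^ 2 * (1 + α) / (2 * s)) + 2⁻¹ * (-‖y‖ ^ 2 * (1 - α) / (2 * s)) ≤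
      -‖(2⁻¹ : ℝ) • x + (2⁻¹ : ℝ) • y‖ ^ 2 / (2 * s) + R ^ 2 * α ^ 2 / (2 * s) := by
  set z := (2⁻¹ : ℝ) • x + (2⁻¹ : ℝ) • y
  have hz : z ∈ Metric.closedBall 0 R :=
    convex_closedBall 0 R hx hy (by norm_num) (by norm_num) (by norm_num)
  have hzR : ‖z‖ ^ 2 ≤ R ^ 2 := by gcongr; simpa using hz
  have hmid : (1 - α ^ 2) * ‖z‖ ^ 2 ≤ 2⁻¹ * ((1 + α) * ‖x‖ ^ 2 + (1 - α) * ‖y‖ ^ 2) :=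
    one_sub_sq_mul_norm_sq_le x y α
  have hα : α ^ 2 * ‖z‖ ^ 2 ≤ α ^ 2 * R ^ 2 := by gcongr
  rw [← mul_div_assoc, ← mul_div_assoc, ← add_div, ← add_div]
  gcongr ?_ / _
  linarith

theorem logconcave_variance_bound_general {E : Type*} [NormedAddCommGroup E]
    [InnerProductSpace ℝ E] [FiniteDimensional ℝ E] [MeasurableSpace E] [BorelSpace E]
    {R s : ℝ} (α : ℝ) (hs : 0 < s) {f : E → ℝ} (hf0 : 0 ≤ f) (hfm : Measurable f)
    (hflc : LogConcaveFn f) (hfsupp : f.support ⊆ Metric.closedBall 0 R) :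
    (∫ x, f x * Real.exp (-‖x‖ ^ 2 * (1 + α) / (2 * s))) *
      (∫ x, f x * Real.exp (-‖x‖ ^ 2 * (1 - α) / (2 * s))) ≤
    Real.exp (R ^ 2 * α ^ 2 / s) * (∫ x, f x * Real.exp (-‖x‖ ^ 2 / (2 * s))) ^ 2 := by
  set I := ∫ x, f x * Real.exp (-‖x‖ ^ 2 * (1 + α) / (2 * s)) with hI
  set J := ∫ x, f x * Real.exp (-‖x‖ ^ 2 * (1 - α) / (2 * s))
  have hI0 : 0 ≤ I := integral_nonneg fun x ↦ mul_nonneg (hf0 x) (Real.exp_nonneg _)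
  have hJ0 : 0 ≤ J := integral_nonneg fun x ↦ mul_nonneg (hf0 x) (Real.exp_nonneg _)
  by_cases h_int : Integrable fun x ↦ f x * Real.exp (-‖x‖ ^ 2 * (1 + α) / (2 * s))
  swap
  · rw [hI, integral_undef h_int, zero_mul]
    positivity
  have hPL : I ^ (2⁻¹ : ℝ) * J ^ (2⁻¹ : ℝ) ≤
      ∫ x, f x * Real.exp (-‖x‖ ^ 2 / (2 * s) + R ^ 2 * α ^ 2 / (2 * s)) :=
    hflc.integral_mul_exp_rpow_mul_le (prekopaLeindler_volume E) hf0 hfm (by norm_num)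
      (by norm_num) (by norm_num) (by fun_prop) (by fun_prop) (by fun_prop)
      (integrable_mul_of_integrable_mul_of_isCompact (isCompact_closedBall 0 R) hfsupp
        (by fun_prop) (fun x _ ↦ (Real.exp_pos _).ne') (by fun_prop) h_int)
      fun x hx y hy ↦ average_gaussian_exponent_le α hs (hfsupp hx) (hfsupp hy)
  simp only [Real.exp_add, ← mul_assoc, integral_mul_const] at hPL
  calc I * J = (I ^ (2⁻¹ : ℝ) * J ^ (2⁻¹ : ℝ)) ^ 2 := by
        rw [mul_pow, ← Real.rpow_mul_natCast hI0, ← Real.rpow_mul_natCast hJ0]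
        norm_num
    _ ≤ ((∫ x, f x * Real.exp (-‖x‖ ^ 2 / (2 * s))) * Real.exp (R ^ 2 * α ^ 2 / (2 * s))) ^ 2 := by
        gcongr
    _ = Real.exp (R ^ 2 * α ^ 2 / s) * (∫ x, f x * Real.exp (-‖x‖ ^ 2 / (2 * s))) ^ 2 := by
        rw [mul_pow, ← Real.exp_nat_mul, mul_comm]
        congr 2
        push_cast
        ring

/-- Variance bound for logconcave functions: for `f` logconcave supported on a
compact subset of `R₁·B_n`, `0 < α ≤ 1/2`, and
`G(s) = ∫ f(x) e^{-‖x‖²/(2s)} dx`,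
`G(σ²/(1+α))·G(σ²/(1-α)) ≤ exp(2R₁²α²/σ²)·G(σ²)²`. -/
theorem logconcave_variance_bound
    (n : ℕ) (hn : 1 ≤ n) (R₁ σ α : ℝ) (hR : 0 < R₁) (hσ : 0 < σ)
    (hα0 : 0 < α) (hα : α ≤ 1 / 2)
    (f : EuclideanSpace ℝ (Fin n) → ℝ) (hf0 : ∀ x, 0 ≤ f x) (hfm : Measurable f)
    (hflc : LogConcaveFn f) (hfc : HasCompactSupport f)
    (hfsupp : Function.support f ⊆ Metric.closedBall 0 R₁) :
    (∫ x, f x * Real.exp (-‖x‖ ^ 2 / (2 * (σ ^ 2 / (1 + α))))) *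
      (∫ x, f x * Real.exp (-‖x‖ ^ 2 / (2 * (σ ^ 2 / (1 - α))))) ≤
    Real.exp (2 * R₁ ^ 2 * α ^ 2 / σ ^ 2) *
      (∫ x, f x * Real.exp (-‖x‖ ^ 2 / (2 * σ ^ 2))) ^ 2 := by
  simp only [← mul_div_assoc, div_div_eq_mul_div]
  refine (logconcave_variance_bound_general α (sq_pos_of_pos hσ) hf0 hfm hflc hfsupp).trans ?_
  gcongr
  linarith [sq_nonneg R₁]
end

section
/- Let n ≥ 3, let K ⊆ ℝⁿ be a convex body, and σ > 0. With α = 1/n, (∫_K e^{−(1−α)‖x‖²/(2σ²)} dx) · (∫_K e^{−(1+α)‖x‖²/(2σ²)} dx) ≤ (1 + 2/n) · (∫_K e^{−‖x‖²/(2σ²)} dx)². Equivalently, if X is drawn from the Gaussian of variance σ_i² restricted to K, σ_{i+1}² = σ_i²(1+1/n), and Y = exp(−‖X‖²/(2σ_{i+1}²))/exp(−‖X‖²/(2σ_i²)), then E(Y²)/E(Y)² < 1 + 2/n. -/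
open MeasureTheory

/-!
For a log-concave `f` on a `d`-dimensional space, the perspective `(x, a) ↦ f (x / a) ^ a` is
jointly log-concave, and its integral over `x` is `a ^ d * ∫ f ^ a`. By the Prékopa–Leindler
inequality this is a log-concave function of `a`. Comparing its values at `1 - α`, `1` and `1 + α`
gives `(1 - α ^ 2) ^ d * (∫ f ^ (1 - α)) * (∫ f ^ (1 + α)) ≤ (∫ f) ^ 2`, and for `α = 1 / d`
Bernoulli's inequality bounds `(1 - α ^ 2) ^ (-d)` by `1 + 2 / d`.
-/

open Module (finrank)
open scoped ENNReal Pointwise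

section LebesgueIntegral

variable {α : Type*} [MeasurableSpace α] {μ : Measure α} {f : α → ℝ≥0∞}

theorem lintegral_eq_lintegral_meas_ofReal_lt (hf : AEMeasurable f μ) (hfin : ∀ x, f x ≠ ∞) :
    ∫⁻ x, f x ∂μ = ∫⁻ r in Set.Ioi (0 : ℝ), μ {x | ENNReal.ofReal r < f x} := by
  have layercake := lintegral_eq_lintegral_meas_lt μ (f := fun x => (f x).toReal)
    (ae_of_all _ fun _ => ENNReal.toReal_nonneg) hf.ennreal_toReal
  simp only [ENNReal.ofReal_toReal (hfin _)] at layercake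
  rw [layercake]
  refine setLIntegral_congr_fun measurableSet_Ioi fun r (hr : 0 < r) => ?_
  simp only [ENNReal.ofReal_lt_iff_lt_toReal hr.le (hfin _)]

theorem lintegral_eq_iSup_lintegral_min_natCast (hf : AEMeasurable f μ) :
    ∫⁻ x, f x ∂μ = ⨆ N : ℕ, ∫⁻ x, min (f x) N ∂μ := by
  rw [← lintegral_iSup' (fun N => hf.min aemeasurable_const)
    (ae_of_all _ fun x M N hMN => by dsimp only; gcongr)]
  refine lintegral_congr fun x => ?_
  rw [← inf_iSup_eq, ENNReal.iSup_natCast, inf_top_eq]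

theorem exists_measurable_ge_ae_eq (hf : AEMeasurable f μ) :
    ∃ g : α → ℝ≥0∞, Measurable g ∧ f ≤ g ∧ f =ᵐ[μ] g := by
  set N := toMeasurable μ {x | f x ≠ hf.mk f x}
  have hN : μ N = 0 := (measure_toMeasurable _).trans hf.ae_eq_mk
  refine ⟨fun x => hf.mk f x + N.indicator (fun _ => ∞) x, hf.measurable_mk.add
    (measurable_const.indicator (measurableSet_toMeasurable _ _)), fun x => ?_, ?_⟩
  · by_cases hx : x ∈ N
    · simp [hx]
    · have : f x = hf.mk f x := not_not.1 fun hne => hx (subset_toMeasurable _ _ hne)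
      simp [this]
  · filter_upwards [hf.ae_eq_mk, measure_eq_zero_iff_ae_notMem.1 hN] with x hx hxN
    simp [hx, hxN]

theorem lintegral_comp_inv_smul {E : Type*} [NormedAddCommGroup E] [NormedSpace ℝ E]
    [FiniteDimensional ℝ E] [MeasurableSpace E] [BorelSpace E] (μ : Measure E)
    [μ.IsAddHaarMeasure] (f : E → ℝ≥0∞) {r : ℝ} (hr : 0 < r) :
    ∫⁻ x, f (r⁻¹ • x) ∂μ = ENNReal.ofReal r ^ finrank ℝ E * ∫⁻ x, f x ∂μ := by
  have hr' : r⁻¹ ≠ 0 := inv_ne_zero hr.ne'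
  have hmap := lintegral_map_equiv (μ := μ) f
    (Homeomorph.smulOfNeZero r⁻¹ hr').toMeasurableEquiv
  simp only [Homeomorph.toMeasurableEquiv_coe, Homeomorph.smulOfNeZero_apply] at hmap
  rw [← hmap, Measure.map_addHaar_smul μ hr', lintegral_smul_measure, inv_pow, inv_inv,
    abs_of_pos (pow_pos hr _), ENNReal.ofReal_pow hr.le, smul_eq_mul]

end LebesgueIntegral

section WeightedMeans

variable {s t : ℝ}

theorem rpow_mul_rpow_self (hs : 0 ≤ s) (ht : 0 ≤ t) (hst : s + t = 1) (a : ℝ≥0∞) :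
    a ^ s * a ^ t = a := by
  rw [← ENNReal.rpow_add_of_nonneg _ _ hs ht, hst, ENNReal.rpow_one]

theorem mul_rpow_mul_mul_rpow (hs : 0 ≤ s) (ht : 0 ≤ t) (a b c d : ℝ≥0∞) :
    (a * b) ^ s * (c * d) ^ t = a ^ s * c ^ t * (b ^ s * d ^ t) := by
  rw [ENNReal.mul_rpow_of_nonneg _ _ hs, ENNReal.mul_rpow_of_nonneg _ _ ht, mul_mul_mul_comm]

theorem min_le_rpow_mul_rpow (hs : 0 ≤ s) (ht : 0 ≤ t) (hst : s + t = 1) (a b : ℝ≥0∞) :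
    min a b ≤ a ^ s * b ^ t := by
  calc min a b = min a b ^ s * min a b ^ t := (rpow_mul_rpow_self hs ht hst _).symm
    _ ≤ a ^ s * b ^ t := by
      gcongr
      exacts [min_le_left a b, min_le_right a b]

theorem rpow_mul_rpow_le_ofReal_mul_add (hs : 0 < s) (ht : 0 < t) (hst : s + t = 1)
    (a b : ℝ≥0∞) :
    a ^ s * b ^ t ≤ ENNReal.ofReal s * a + ENNReal.ofReal t * b := by
  have young := ENNReal.young_inequality (a ^ s) (b ^ t) (.inv_inv hs ht hst)
  rwa [ENNReal.rpow_rpow_inv hs.ne', ENNReal.rpow_rpow_inv ht.ne',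
    ENNReal.ofReal_inv_of_pos hs, ENNReal.ofReal_inv_of_pos ht, div_eq_mul_inv, div_eq_mul_inv,
    inv_inv, inv_inv, mul_comm a, mul_comm b] at young

theorem iSup_rpow_mul_iSup_rpow_le {ι κ : Sort*} (hs : 0 < s) (ht : 0 < t) {u : ι → ℝ≥0∞}
    {v : κ → ℝ≥0∞} {c : ℝ≥0∞} (h : ∀ i j, u i ^ s * v j ^ t ≤ c) :
    (⨆ i, u i) ^ s * (⨆ j, v j) ^ t ≤ c := by
  have hu : (⨆ i, u i) ^ s = ⨆ i, u i ^ s := (ENNReal.orderIsoRpow s hs).map_iSup u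
  have hv : (⨆ j, v j) ^ t = ⨆ j, v j ^ t := (ENNReal.orderIsoRpow t ht).map_iSup v
  simp only [hu, hv, ENNReal.iSup_mul, ENNReal.mul_iSup]
  exact iSup₂_le fun j i => h i j

end WeightedMeans

section RealLine

variable {A B : Set ℝ}

theorem volume_add_volume_le_of_isGreatest_of_isLeast {a b : ℝ} (ha : IsGreatest A a)
    (hb : IsLeast B b) (hB : MeasurableSet B) :
    volume A + volume B ≤ volume (A + B) := by
  -- The translates `A + b` and `a + B` lie in `A + B` and meet only at `a + b`.
  have hdisj : AEDisjoint volume (A + {b}) ({a} + B) := by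
    refine measure_mono_null (t := {a + b}) ?_ (by simp)
    simp only [Set.add_singleton, Set.singleton_add]
    rintro _ ⟨⟨x, hx, rfl⟩, y, hy, hxy : a + y = x + b⟩
    have hxa := ha.2 hx
    have hby := hb.2 hy
    simp only [Set.mem_singleton_iff]
    linarith
  calc volume A + volume B = volume (A + {b}) + volume ({a} + B) := by simp
    _ = volume (A + {b} ∪ ({a} + B)) := by
      have haB : MeasurableSet ({a} + B) := by
        rw [Set.singleton_add]
        exact hB.const_vadd a
      exact (measure_union₀ haB.nullMeasurableSet hdisj).symm
    _ ≤ volume (A + B) := by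
      refine measure_mono (Set.union_subset ?_ ?_)
      · exact Set.add_subset_add_left (Set.singleton_subset_iff.2 hb.1)
      · exact Set.add_subset_add_right (Set.singleton_subset_iff.2 ha.1)

theorem volume_add_volume_le (hA : MeasurableSet A) (hB : MeasurableSet B)
    (hA' : A.Nonempty) (hB' : B.Nonempty) :
    volume A + volume B ≤ volume (A + B) := by
  obtain ⟨a, ha⟩ := hA'
  obtain ⟨b, hb⟩ := hB'
  rw [hA.measure_eq_iSup_isCompact, hB.measure_eq_iSup_isCompact]
  simp only [iSup_and']
  refine ENNReal.biSup_add_biSup_le' ⟨∅, by simp⟩ ⟨∅, by simp⟩ fun K hK L hL => ?_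
  obtain ⟨_, hmax⟩ := (hK.2.insert a).exists_isGreatest (Set.insert_nonempty a K)
  obtain ⟨_, hmin⟩ := (hL.2.insert b).exists_isLeast (Set.insert_nonempty b L)
  calc volume K + volume L ≤ volume (insert a K) + volume (insert b L) := by
        gcongr <;> exact Set.subset_insert _ _
    _ ≤ volume (insert a K + insert b L) :=
        volume_add_volume_le_of_isGreatest_of_isLeast hmax hmin (hL.2.insert b).measurableSet
    _ ≤ volume (A + B) :=
        measure_mono (Set.add_subset_add (Set.insert_subset ha hK.1) (Set.insert_subset hb hL.1))

theorem ofReal_mul_volume_add_le {s t : ℝ} (hs : 0 < s) (ht : 0 < t) (hA : MeasurableSet A)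
    (hB : MeasurableSet B) (hA' : A.Nonempty) (hB' : B.Nonempty) :
    ENNReal.ofReal s * volume A + ENNReal.ofReal t * volume B ≤ volume (s • A + t • B) := by
  have h := volume_add_volume_le (hA.const_smul_of_ne_zero hs.ne')
    (hB.const_smul_of_ne_zero ht.ne') hA'.smul_set hB'.smul_set
  simpa only [Measure.addHaar_smul_of_nonneg volume hs.le,
    Measure.addHaar_smul_of_nonneg volume ht.le, Module.finrank_self, pow_one] using h

variable {f g h : ℝ → ℝ≥0∞} {s t : ℝ}

theorem ofReal_mul_lintegral_add_le_of_iSup_eq (hs : 0 < s) (ht : 0 < t) (hf : Measurable f)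
    (hg : Measurable g) (hh : Measurable h) (hsup : ⨆ x, f x = ⨆ x, g x)
    (hfin : ⨆ x, f x ≠ ∞) (hfgh : ∀ x y, min (f x) (g y) ≤ h (s • x + t • y)) :
    ENNReal.ofReal s * (∫⁻ x, f x) + ENNReal.ofReal t * ∫⁻ x, g x ≤ ∫⁻ x, h x := by
  set c := ⨆ x, f x
  have hfc : ∀ x, f x ≤ c := le_iSup f
  have hgc : ∀ x, g x ≤ c := fun x => hsup ▸ le_iSup g x
  have superlevel : ∀ r, ENNReal.ofReal s * volume {x | r < f x} +
      ENNReal.ofReal t * volume {x | r < g x} ≤ volume {x | r < min (h x) c} := by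
    intro r
    rcases lt_or_ge r c with hr | hr
    · refine (ofReal_mul_volume_add_le hs ht (measurableSet_lt measurable_const hf)
        (measurableSet_lt measurable_const hg) (lt_iSup_iff.1 hr :)
        (lt_iSup_iff.1 (hr.trans_eq hsup) :)).trans (measure_mono ?_)
      rintro _ ⟨_, ⟨x, hx, rfl⟩, _, ⟨y, hy, rfl⟩, rfl⟩
      exact lt_min ((lt_min hx hy).trans_le (hfgh x y)) hr
    · simp [((hfc _).trans hr).not_gt, ((hgc _).trans hr).not_gt]
  calc ENNReal.ofReal s * (∫⁻ x, f x) + ENNReal.ofReal t * ∫⁻ x, g x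
      = (∫⁻ r in Set.Ioi (0 : ℝ), ENNReal.ofReal s * volume {x | ENNReal.ofReal r < f x}) +
        ∫⁻ r in Set.Ioi (0 : ℝ), ENNReal.ofReal t * volume {x | ENNReal.ofReal r < g x} := by
        rw [lintegral_eq_lintegral_meas_ofReal_lt hf.aemeasurable
            fun x => ne_top_of_le_ne_top hfin (hfc x),
          lintegral_eq_lintegral_meas_ofReal_lt hg.aemeasurable
            fun x => ne_top_of_le_ne_top hfin (hgc x),
          lintegral_const_mul' _ _ ENNReal.ofReal_ne_top,
          lintegral_const_mul' _ _ ENNReal.ofReal_ne_top]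
    _ ≤ ∫⁻ r in Set.Ioi (0 : ℝ), volume {x | ENNReal.ofReal r < min (h x) c} :=
        (le_lintegral_add _ _).trans (lintegral_mono fun r => superlevel _)
    _ = ∫⁻ x, min (h x) c := (lintegral_eq_lintegral_meas_ofReal_lt
        (hh.min measurable_const).aemeasurable
        fun x => ne_top_of_le_ne_top hfin (min_le_right _ _)).symm
    _ ≤ ∫⁻ x, h x := lintegral_mono fun x => min_le_left _ _

theorem lintegral_rpow_mul_rpow_le_of_iSup_ne_top (hs : 0 < s) (ht : 0 < t) (hst : s + t = 1)
    (hf : Measurable f) (hg : Measurable g) (hh : Measurable h) (hf_fin : ⨆ x, f x ≠ ∞)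
    (hg_fin : ⨆ x, g x ≠ ∞) (hfgh : ∀ x y, f x ^ s * g y ^ t ≤ h (s • x + t • y)) :
    (∫⁻ x, f x) ^ s * (∫⁻ x, g x) ^ t ≤ ∫⁻ x, h x := by
  set F := ⨆ x, f x with hF
  set G := ⨆ x, g x with hG
  rcases eq_or_ne F 0 with hF0 | hF0
  · simp [ENNReal.iSup_eq_zero.1 hF0, hs]
  rcases eq_or_ne G 0 with hG0 | hG0
  · simp [ENNReal.iSup_eq_zero.1 hG0, ht]
  -- With both suprema scaled to `1`, the superlevel sets of the two functions are nonempty for the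
  -- same levels, as the one-dimensional Brunn–Minkowski inequality requires.
  set c := F⁻¹ ^ s * G⁻¹ ^ t
  have hc0 : c ≠ 0 := mul_ne_zero (by simp [hs.le, hf_fin]) (by simp [ht.le, hg_fin])
  have hc_fin : c ≠ ∞ := ENNReal.mul_ne_top (by simp [hs.le, hF0]) (by simp [ht.le, hG0])
  have hsup_f : ⨆ x, F⁻¹ * f x = 1 := by
    rw [← ENNReal.mul_iSup, ← hF, ENNReal.inv_mul_cancel hF0 hf_fin]
  have hsup_g : ⨆ x, G⁻¹ * g x = 1 := by
    rw [← ENNReal.mul_iSup, ← hG, ENNReal.inv_mul_cancel hG0 hg_fin]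
  have hmin : ∀ x y, min (F⁻¹ * f x) (G⁻¹ * g y) ≤ c * h (s • x + t • y) := fun x y =>
    calc min (F⁻¹ * f x) (G⁻¹ * g y) ≤ (F⁻¹ * f x) ^ s * (G⁻¹ * g y) ^ t :=
          min_le_rpow_mul_rpow hs.le ht.le hst _ _
      _ = c * (f x ^ s * g y ^ t) := mul_rpow_mul_mul_rpow hs.le ht.le _ _ _ _
      _ ≤ c * h (s • x + t • y) := by gcongr; exact hfgh x y
  have key := ofReal_mul_lintegral_add_le_of_iSup_eq hs ht (hf.const_mul F⁻¹)
    (hg.const_mul G⁻¹) (hh.const_mul c) (hsup_f.trans hsup_g.symm) (by simp [hsup_f]) hmin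
  rw [lintegral_const_mul _ hf, lintegral_const_mul _ hg, lintegral_const_mul _ hh] at key
  refine (ENNReal.mul_le_mul_iff_right hc0 hc_fin).1 ?_
  rw [← mul_rpow_mul_mul_rpow hs.le ht.le]
  exact (rpow_mul_rpow_le_ofReal_mul_add hs ht hst _ _).trans key

end RealLine

/-- The Prékopa–Leindler inequality for `μ`, with arbitrary weights: `f x ^ s * g y ^ t` being at
most `h (s x + t y)` for all `x` and `y` implies the same inequality between the integrals. It is
isolated as a property of the measure so that it can be transported and tensorized. -/
def IsPrekopaLeindler {E : Type*} [AddCommGroup E] [Module ℝ E] [MeasurableSpace E]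
    (μ : Measure E) : Prop :=
  ∀ ⦃s t : ℝ⦄, 0 < s → 0 < t → s + t = 1 → ∀ ⦃f g h : E → ℝ≥0∞⦄,
    Measurable f → Measurable g → Measurable h →
    (∀ x y, f x ^ s * g y ^ t ≤ h (s • x + t • y)) →
    (∫⁻ x, f x ∂μ) ^ s * (∫⁻ x, g x ∂μ) ^ t ≤ ∫⁻ x, h x ∂μ

namespace IsPrekopaLeindler

section Module

variable {E F : Type*} [AddCommGroup E] [Module ℝ E] [MeasurableSpace E]
  [AddCommGroup F] [Module ℝ F] [MeasurableSpace F] {μ : Measure E} {ν : Measure F}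

theorem of_subsingleton [Subsingleton E] (μ : Measure E) : IsPrekopaLeindler μ := by
  intro s t hs ht hst f g h _ _ _ hfgh
  let _ : Unique E := uniqueOfSubsingleton 0
  simp only [lintegral_unique]
  rw [mul_rpow_mul_mul_rpow hs.le ht.le, rpow_mul_rpow_self hs.le ht.le hst]
  gcongr
  exact (hfgh _ _).trans_eq (congrArg h (Subsingleton.elim _ _))

theorem volume_real : IsPrekopaLeindler (volume : Measure ℝ) := by
  intro s t hs ht hst f g h hf hg hh hfgh
  rw [lintegral_eq_iSup_lintegral_min_natCast hf.aemeasurable,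
    lintegral_eq_iSup_lintegral_min_natCast hg.aemeasurable]
  have bounded : ∀ (k : ℝ → ℝ≥0∞) (N : ℕ), ⨆ x, min (k x) N ≠ ∞ := fun k N =>
    ne_top_of_le_ne_top (ENNReal.natCast_ne_top N) (iSup_le fun x => min_le_right _ _)
  refine iSup_rpow_mul_iSup_rpow_le hs ht fun M N =>
    lintegral_rpow_mul_rpow_le_of_iSup_ne_top hs ht hst (hf.min measurable_const)
      (hg.min measurable_const) hh (bounded f M) (bounded g N) fun x y => ?_
  calc min (f x) M ^ s * min (g y) N ^ t ≤ f x ^ s * g y ^ t := by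
        gcongr <;> exact min_le_left _ _
    _ ≤ h (s • x + t • y) := hfgh x y

protected theorem prod [SFinite ν] (hμ : IsPrekopaLeindler μ) (hν : IsPrekopaLeindler ν) :
    IsPrekopaLeindler (μ.prod ν) := by
  intro s t hs ht hst f g h hf hg hh hfgh
  rw [lintegral_prod _ hf.aemeasurable, lintegral_prod _ hg.aemeasurable,
    lintegral_prod _ hh.aemeasurable]
  exact hμ hs ht hst hf.lintegral_prod_right' hg.lintegral_prod_right' hh.lintegral_prod_right'
    fun x₁ x₂ => hν hs ht hst (hf.comp measurable_prodMk_left) (hg.comp measurable_prodMk_left)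
      (hh.comp measurable_prodMk_left) fun y₁ y₂ => hfgh (x₁, y₁) (x₂, y₂)

protected theorem map (hμ : IsPrekopaLeindler μ) (L : E →ₗ[ℝ] F) (hL : Measurable L) :
    IsPrekopaLeindler (μ.map L) := by
  intro s t hs ht hst f g h hf hg hh hfgh
  rw [lintegral_map hf hL, lintegral_map hg hL, lintegral_map hh hL]
  exact hμ hs ht hst (hf.comp hL) (hg.comp hL) (hh.comp hL) fun x y => by
    simpa only [map_add, map_smul] using hfgh (L x) (L y)

theorem const_smul (hμ : IsPrekopaLeindler μ) (c : ℝ≥0∞) : IsPrekopaLeindler (c • μ) := by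
  intro s t hs ht hst f g h hf hg hh hfgh
  simp only [lintegral_smul_measure, smul_eq_mul]
  rw [mul_rpow_mul_mul_rpow hs.le ht.le, rpow_mul_rpow_self hs.le ht.le hst]
  gcongr
  exact hμ hs ht hst hf hg hh hfgh

theorem lintegral_rpow_mul_rpow_le (hμ : IsPrekopaLeindler μ) {s t : ℝ} (hs : 0 < s)
    (ht : 0 < t) (hst : s + t = 1) {f g h : E → ℝ≥0∞} (hh : AEMeasurable h μ)
    (hfgh : ∀ x y, f x ^ s * g y ^ t ≤ h (s • x + t • y)) :
    (∫⁻ x, f x ∂μ) ^ s * (∫⁻ x, g x ∂μ) ^ t ≤ ∫⁻ x, h x ∂μ := by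
  obtain ⟨f', hf', hf'_le, hf'_eq⟩ := exists_measurable_le_lintegral_eq μ f
  obtain ⟨g', hg', hg'_le, hg'_eq⟩ := exists_measurable_le_lintegral_eq μ g
  obtain ⟨h', hh', hh'_ge, hh'_eq⟩ := exists_measurable_ge_ae_eq hh
  rw [hf'_eq, hg'_eq, lintegral_congr_ae hh'_eq]
  refine hμ hs ht hst hf' hg' hh' fun x y => ?_
  calc f' x ^ s * g' y ^ t ≤ f x ^ s * g y ^ t := by
        gcongr
        exacts [hf'_le x, hg'_le y]
    _ ≤ h (s • x + t • y) := hfgh x y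
    _ ≤ h' (s • x + t • y) := hh'_ge _

end Module

section Haar

variable {E F : Type*} [NormedAddCommGroup E] [NormedSpace ℝ E] [FiniteDimensional ℝ E]
  [MeasurableSpace E] [BorelSpace E] [NormedAddCommGroup F] [NormedSpace ℝ F]
  [MeasurableSpace F] [BorelSpace F]

theorem of_continuousLinearEquiv {μ : Measure F} [μ.IsAddHaarMeasure]
    (hμ : IsPrekopaLeindler μ) (L : F ≃L[ℝ] E) (ν : Measure E) [ν.IsAddHaarMeasure] :
    IsPrekopaLeindler ν := by
  have := L.isAddHaarMeasure_map μ
  rw [Measure.isAddLeftInvariant_eq_smul ν (μ.map L)]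
  exact (hμ.map L.toLinearMap L.continuous.measurable).const_smul _

theorem volume_pi (n : ℕ) : IsPrekopaLeindler (volume : Measure (Fin n → ℝ)) := by
  induction n with
  | zero => exact of_subsingleton _
  | succ n ih =>
    exact (volume_real.prod ih).of_continuousLinearEquiv
      (ContinuousLinearEquiv.ofFinrankEq (by simp [add_comm])) _

theorem of_isAddHaarMeasure (μ : Measure E) [μ.IsAddHaarMeasure] : IsPrekopaLeindler μ :=
  (volume_pi (finrank ℝ E)).of_continuousLinearEquiv
    (ContinuousLinearEquiv.ofFinrankEq (by simp)) μ

end Haar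

end IsPrekopaLeindler

/-- Log-concavity of a function with values in `[0, ∞]`. No support is specified, so that
restricting a log-concave function to a convex set amounts to taking an indicator. -/
def IsLogConcave {E : Type*} [AddCommGroup E] [Module ℝ E] (f : E → ℝ≥0∞) : Prop :=
  ∀ ⦃s t : ℝ⦄, 0 < s → 0 < t → s + t = 1 → ∀ x y, f x ^ s * f y ^ t ≤ f (s • x + t • y)

namespace IsLogConcave

section Module

variable {E : Type*} [AddCommGroup E] [Module ℝ E] {f : E → ℝ≥0∞}

theorem indicator_exp_neg {K : Set E} {V : E → ℝ} (hV : ConvexOn ℝ K V) :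
    IsLogConcave (K.indicator fun x => ENNReal.ofReal (Real.exp (-V x))) := by
  intro s t hs ht hst x y
  by_cases hx : x ∈ K
  swap
  · simp [hx, hs]
  by_cases hy : y ∈ K
  swap
  · simp [hy, ht]
  have hxy : s • x + t • y ∈ K := hV.1 hx hy hs.le ht.le hst
  have hVxy : V (s • x + t • y) ≤ s * V x + t * V y := hV.2 hx hy hs.le ht.le hst
  rw [Set.indicator_of_mem hx, Set.indicator_of_mem hy, Set.indicator_of_mem hxy,
    ENNReal.ofReal_rpow_of_pos (Real.exp_pos _), ENNReal.ofReal_rpow_of_pos (Real.exp_pos _),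
    ← ENNReal.ofReal_mul (by positivity), ← Real.exp_mul, ← Real.exp_mul, ← Real.exp_add]
  gcongr
  linarith

theorem convex_superlevel (hf : IsLogConcave f) (c : ℝ≥0∞) : Convex ℝ {x | c ≤ f x} := by
  refine convex_iff_forall_pos.2 fun x hx y hy s t hs ht hst => ?_
  calc c ≤ min (f x) (f y) := le_min hx hy
    _ ≤ f x ^ s * f y ^ t := min_le_rpow_mul_rpow hs.le ht.le hst _ _
    _ ≤ f (s • x + t • y) := hf hs ht hst x y

theorem comp_smul (hf : IsLogConcave f) (r : ℝ) : IsLogConcave fun x => f (r • x) := by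
  intro s t hs ht hst x y
  simpa only [smul_add, smul_comm r] using hf hs ht hst (r • x) (r • y)

protected theorem rpow (hf : IsLogConcave f) {a : ℝ} (ha : 0 ≤ a) :
    IsLogConcave fun x => f x ^ a := by
  intro s t hs ht hst x y
  calc (f x ^ a) ^ s * (f y ^ a) ^ t = (f x ^ s * f y ^ t) ^ a := by
        rw [ENNReal.mul_rpow_of_nonneg _ _ ha]
        simp only [← ENNReal.rpow_mul, mul_comm]
    _ ≤ f (s • x + t • y) ^ a := by
        gcongr
        exact hf hs ht hst x y

theorem perspective_mul_le (hf : IsLogConcave f) {s t a b : ℝ} (hs : 0 < s) (ht : 0 < t)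
    (ha : 0 < a) (hb : 0 < b) (x y : E) :
    (f (a⁻¹ • x) ^ a) ^ s * (f (b⁻¹ • y) ^ b) ^ t ≤
      f ((s * a + t * b)⁻¹ • (s • x + t • y)) ^ (s * a + t * b) := by
  set c := s * a + t * b
  have hc : 0 < c := by positivity
  have key := hf (s := s * a / c) (t := t * b / c) (by positivity) (by positivity)
    (by rw [← add_div, div_self hc.ne']) (a⁻¹ • x) (b⁻¹ • y)
  have hpoint : (s * a / c) • a⁻¹ • x + (t * b / c) • b⁻¹ • y = c⁻¹ • (s • x + t • y) := by
    simp only [smul_add, smul_smul]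
    congr 2 <;> field_simp
  rw [hpoint] at key
  calc (f (a⁻¹ • x) ^ a) ^ s * (f (b⁻¹ • y) ^ b) ^ t
      = (f (a⁻¹ • x) ^ (s * a / c) * f (b⁻¹ • y) ^ (t * b / c)) ^ c := by
        rw [ENNReal.mul_rpow_of_nonneg _ _ hc.le]
        simp only [← ENNReal.rpow_mul, div_mul_cancel₀ _ hc.ne', mul_comm]
    _ ≤ f (c⁻¹ • (s • x + t • y)) ^ c := by gcongr

end Module

section Haar

variable {E : Type*} [NormedAddCommGroup E] [NormedSpace ℝ E] [FiniteDimensional ℝ E]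
  [MeasurableSpace E] [BorelSpace E] (μ : Measure E) [μ.IsAddHaarMeasure] {f : E → ℝ≥0∞}

protected theorem aemeasurable (hf : IsLogConcave f) : AEMeasurable f μ := by
  have : NullMeasurable f μ := measurable_of_Ici (δ := NullMeasurableSpace E μ) fun c =>
    (hf.convex_superlevel c).nullMeasurableSet μ
  exact this.aemeasurable

theorem pow_mul_lintegral_rpow_mul_le (hf : IsLogConcave f) {s t a b : ℝ} (hs : 0 < s)
    (ht : 0 < t) (hst : s + t = 1) (ha : 0 < a) (hb : 0 < b) :
    (ENNReal.ofReal a ^ finrank ℝ E * ∫⁻ x, f x ^ a ∂μ) ^ s *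
      (ENNReal.ofReal b ^ finrank ℝ E * ∫⁻ x, f x ^ b ∂μ) ^ t ≤
    ENNReal.ofReal (s * a + t * b) ^ finrank ℝ E * ∫⁻ x, f x ^ (s * a + t * b) ∂μ := by
  have hc : 0 < s * a + t * b := by positivity
  rw [← lintegral_comp_inv_smul μ (fun x => f x ^ a) ha,
    ← lintegral_comp_inv_smul μ (fun x => f x ^ b) hb,
    ← lintegral_comp_inv_smul μ (fun x => f x ^ (s * a + t * b)) hc]
  exact (IsPrekopaLeindler.of_isAddHaarMeasure μ).lintegral_rpow_mul_rpow_le hs ht hst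
    (((hf.rpow hc.le).comp_smul _).aemeasurable μ) (hf.perspective_mul_le hs ht ha hb)

theorem one_sub_sq_pow_mul_lintegral_rpow_le (hf : IsLogConcave f) {α : ℝ} (hα : |α| < 1) :
    ENNReal.ofReal (1 - α ^ 2) ^ finrank ℝ E *
      ((∫⁻ x, f x ^ (1 - α) ∂μ) * ∫⁻ x, f x ^ (1 + α) ∂μ) ≤ (∫⁻ x, f x ∂μ) ^ 2 := by
  obtain ⟨hα₁, hα₂⟩ := abs_lt.1 hα
  have hsub : 0 < 1 - α := by linarith
  have hadd : 0 < 1 + α := by linarith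
  have midpoint : (1 / 2 : ℝ) * (1 - α) + 1 / 2 * (1 + α) = 1 := by ring
  have key := hf.pow_mul_lintegral_rpow_mul_le μ one_half_pos one_half_pos (add_halves 1)
    hsub hadd
  rw [midpoint, ENNReal.ofReal_one, one_pow, one_mul,
    ← ENNReal.mul_rpow_of_nonneg _ _ one_half_pos.le, one_div,
    ENNReal.rpow_inv_le_iff two_pos] at key
  calc _ = ENNReal.ofReal (1 - α) ^ finrank ℝ E * (∫⁻ x, f x ^ (1 - α) ∂μ) *
        (ENNReal.ofReal (1 + α) ^ finrank ℝ E * ∫⁻ x, f x ^ (1 + α) ∂μ) := by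
        rw [show 1 - α ^ 2 = (1 - α) * (1 + α) by ring, ENNReal.ofReal_mul hsub.le, mul_pow,
          mul_mul_mul_comm]
    _ ≤ (∫⁻ x, f x ∂μ) ^ 2 := by simpa only [ENNReal.rpow_one, ENNReal.rpow_two] using key

end Haar

end IsLogConcave

theorem one_le_one_add_two_div_mul_one_sub_sq_pow {n : ℕ} (hn : 2 ≤ n) :
    1 ≤ (1 + 2 / (n : ℝ)) * (1 - (1 / (n : ℝ)) ^ 2) ^ n := by
  have hn' : (2 : ℝ) ≤ n := by exact_mod_cast hn
  have hinv : 1 / (n : ℝ) ≤ 1 / 2 := one_div_le_one_div_of_le two_pos hn'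
  have hpos : 0 < 1 / (n : ℝ) := by positivity
  have bernoulli : 1 - 1 / (n : ℝ) ≤ (1 - (1 / (n : ℝ)) ^ 2) ^ n :=
    calc 1 - 1 / (n : ℝ) = 1 + n * -(1 / (n : ℝ)) ^ 2 := by field_simp; ring
      _ ≤ (1 + -(1 / (n : ℝ)) ^ 2) ^ n := one_add_mul_le_pow (by nlinarith) n
      _ = (1 - (1 / (n : ℝ)) ^ 2) ^ n := by ring
  calc (1 : ℝ) ≤ (1 + 2 * (1 / n)) * (1 - 1 / n) := by nlinarith
    _ = (1 + 2 / n) * (1 - 1 / n) := by ring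
    _ ≤ (1 + 2 / n) * (1 - (1 / (n : ℝ)) ^ 2) ^ n := by gcongr

section Haar

variable {E : Type*} [NormedAddCommGroup E] [NormedSpace ℝ E] [FiniteDimensional ℝ E]
  [MeasurableSpace E] [BorelSpace E] (μ : Measure E) [μ.IsAddHaarMeasure]

theorem IsLogConcave.lintegral_rpow_mul_lintegral_rpow_le {f : E → ℝ≥0∞} (hf : IsLogConcave f)
    (hd : 2 ≤ finrank ℝ E) :
    (∫⁻ x, f x ^ (1 - 1 / (finrank ℝ E : ℝ)) ∂μ) *
      (∫⁻ x, f x ^ (1 + 1 / (finrank ℝ E : ℝ)) ∂μ) ≤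
    ENNReal.ofReal (1 + 2 / (finrank ℝ E : ℝ)) * (∫⁻ x, f x ∂μ) ^ 2 := by
  set d := finrank ℝ E
  have hd' : (1 : ℝ) < d := by exact_mod_cast hd
  have hrate : |1 / (d : ℝ)| < 1 := by
    rw [abs_of_pos (by positivity)]
    exact (div_lt_one (by positivity)).2 hd'
  have hrate_sq : 0 ≤ 1 - (1 / (d : ℝ)) ^ 2 :=
    sub_nonneg.2 ((sq_lt_one_iff_abs_lt_one _).2 hrate).le
  have hfactor : 1 ≤ ENNReal.ofReal (1 + 2 / d) * ENNReal.ofReal (1 - (1 / (d : ℝ)) ^ 2) ^ d := by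
    rw [← ENNReal.ofReal_pow hrate_sq, ← ENNReal.ofReal_mul (by positivity)]
    exact ENNReal.one_le_ofReal.2 (one_le_one_add_two_div_mul_one_sub_sq_pow hd)
  refine (le_mul_of_one_le_left' hfactor).trans ?_
  rw [mul_assoc]
  gcongr
  exact hf.one_sub_sq_pow_mul_lintegral_rpow_le μ hrate

theorem setLIntegral_exp_neg_mul_eq_lintegral_rpow {K : Set E} (hK : Convex ℝ K) (V : E → ℝ)
    {a : ℝ} (ha : 0 < a) :
    ∫⁻ x in K, ENNReal.ofReal (Real.exp (-a * V x)) ∂μ =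
      ∫⁻ x, K.indicator (fun x => ENNReal.ofReal (Real.exp (-V x))) x ^ a ∂μ := by
  rw [← lintegral_indicator₀ (hK.nullMeasurableSet μ)]
  refine lintegral_congr fun x => ?_
  by_cases hx : x ∈ K
  · simp only [Set.indicator_of_mem hx]
    rw [ENNReal.ofReal_rpow_of_pos (Real.exp_pos _), ← Real.exp_mul]
    congr 2
    ring
  · simp [hx, ha]

theorem setIntegral_exp_neg_mul_eq_toReal_lintegral_rpow {K : Set E} (hK : Convex ℝ K)
    {V : E → ℝ} (hV : AEMeasurable V (μ.restrict K)) {a : ℝ} (ha : 0 < a) :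
    ∫ x in K, Real.exp (-a * V x) ∂μ =
      (∫⁻ x, K.indicator (fun x => ENNReal.ofReal (Real.exp (-V x))) x ^ a ∂μ).toReal := by
  rw [← setLIntegral_exp_neg_mul_eq_lintegral_rpow μ hK V ha]
  exact integral_eq_lintegral_of_nonneg_ae (ae_of_all _ fun _ => (Real.exp_pos _).le)
    (Real.measurable_exp.comp_aemeasurable (hV.const_mul (-a))).aestronglyMeasurable

theorem fixed_rate_variance_bound_general (hd : 2 ≤ finrank ℝ E) {K : Set E} {V : E → ℝ}
    (hV : ConvexOn ℝ K V) (hint : IntegrableOn (fun x => Real.exp (-V x)) K μ) :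
    (∫ x in K, Real.exp (-(1 - 1 / (finrank ℝ E : ℝ)) * V x) ∂μ) *
      (∫ x in K, Real.exp (-(1 + 1 / (finrank ℝ E : ℝ)) * V x) ∂μ) ≤
    (1 + 2 / (finrank ℝ E : ℝ)) * (∫ x in K, Real.exp (-V x) ∂μ) ^ 2 := by
  have hd' : (1 : ℝ) < finrank ℝ E := by exact_mod_cast hd
  have hrate : 1 / (finrank ℝ E : ℝ) < 1 := (div_lt_one (by positivity)).2 hd'
  have hVmeas : AEMeasurable V (μ.restrict K) := by
    simpa [Function.comp_def, Pi.neg_def] using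
      (Real.measurable_log.comp_aemeasurable hint.aemeasurable).neg
  have hmass := setIntegral_exp_neg_mul_eq_toReal_lintegral_rpow μ hV.1 hVmeas one_pos
  have hfin := setLIntegral_exp_neg_mul_eq_lintegral_rpow μ hV.1 V one_pos
  simp only [neg_one_mul, ENNReal.rpow_one] at hmass hfin
  rw [setIntegral_exp_neg_mul_eq_toReal_lintegral_rpow μ hV.1 hVmeas (sub_pos.2 hrate),
    setIntegral_exp_neg_mul_eq_toReal_lintegral_rpow μ hV.1 hVmeas (by positivity), hmass,
    ← ENNReal.toReal_mul, ← ENNReal.toReal_pow,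
    ← ENNReal.toReal_ofReal (r := 1 + 2 / (finrank ℝ E : ℝ)) (by positivity),
    ← ENNReal.toReal_mul]
  refine ENNReal.toReal_mono (ENNReal.mul_ne_top ENNReal.ofReal_ne_top
    (ENNReal.pow_ne_top (hfin ▸ hint.lintegral_lt_top.ne))) ?_
  exact (IsLogConcave.indicator_exp_neg hV).lintegral_rpow_mul_lintegral_rpow_le μ hd

end Haar

theorem convexOn_norm_sq_div {E : Type*} [NormedAddCommGroup E] [NormedSpace ℝ E] {K : Set E}
    (hK : Convex ℝ K) {c : ℝ} (hc : 0 ≤ c) : ConvexOn ℝ K fun x => ‖x‖ ^ 2 / c := by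
  simpa only [div_eq_inv_mul, smul_eq_mul, Pi.pow_apply] using
    ((convexOn_norm hK).pow (fun _ _ => norm_nonneg _) 2).smul (inv_nonneg.2 hc)

/-- Variance bound at the fixed cooling rate `1 + 1/n`: for a convex body `K`
in `ℝⁿ` with `n ≥ 3` and `α = 1/n`,
`(∫_K e^{-(1-α)‖x‖²/(2σ²)})·(∫_K e^{-(1+α)‖x‖²/(2σ²)}) ≤
 (1 + 2/n)·(∫_K e^{-‖x‖²/(2σ²)})²`. -/
theorem fixed_rate_variance_bound
    (n : ℕ) (hn : 3 ≤ n)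
    (K : Set (EuclideanSpace ℝ (Fin n)))
    (hKconv : Convex ℝ K) (hKcomp : IsCompact K) (hKint : (interior K).Nonempty)
    (σ : ℝ) (hσ : 0 < σ) :
    (∫ x in K, Real.exp (-(1 - 1 / (n : ℝ)) * ‖x‖ ^ 2 / (2 * σ ^ 2))) *
      (∫ x in K, Real.exp (-(1 + 1 / (n : ℝ)) * ‖x‖ ^ 2 / (2 * σ ^ 2))) ≤
    (1 + 2 / (n : ℝ)) * (∫ x in K, Real.exp (-‖x‖ ^ 2 / (2 * σ ^ 2))) ^ 2 := by
  have hV : ConvexOn ℝ K fun x => ‖x‖ ^ 2 / (2 * σ ^ 2) :=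
    convexOn_norm_sq_div hKconv (by positivity)
  have hint : IntegrableOn (fun x => Real.exp (-(‖x‖ ^ 2 / (2 * σ ^ 2)))) K :=
    ContinuousOn.integrableOn_compact hKcomp (by fun_prop)
  have key := fixed_rate_variance_bound_general volume
    (by rw [finrank_euclideanSpace_fin]; omega) hV hint
  simpa only [finrank_euclideanSpace_fin, mul_div_assoc, neg_div] using key
end
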